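/- Entropic lower bound on quantum guesswork via Holevo information: the quantum guesswork satisfies G(ρ, p) ≥ 2^{H(p) − χ(ρ,p)} / e + 1/2, where H(p) is the Shannon entropy of the prior in bits, χ(ρ,p) is the Holevo information of the ensemble in bits, and e is Euler's number. -/

import Mathlib

open Matrix BigOperators Finset ComplexOrder

noncomputable section

/-- A POVM indexed by a finite type `Y` in dimension `d`. -/
def IsPOVM {d : ℕ} {Y : Type*} [Fintype Y] (E : Y → Matrix (Fin d) (Fin d) ℂ) : Prop :=
  (∀ y, (E y).PosSemidef) ∧ ∑ y, E y = 1

/-- Guesswork of the strategy (POVM) `E` indexed by permutations: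
`Ĝ(ρ,p;E) = ∑_σ ∑_t t · p(σ(t)) · Re Tr(E_σ ρ_{σ(t)})`. -/
def Ghat {d n : ℕ} (ρ : Fin n → Matrix (Fin d) (Fin d) ℂ) (p : Fin n → ℝ)
    (E : Equiv.Perm (Fin n) → Matrix (Fin d) (Fin d) ℂ) : ℝ :=
  ∑ σ : Equiv.Perm (Fin n), ∑ t : Fin n,
    ((t.val : ℝ) + 1) * p (σ t) * ((E σ * ρ (σ t)).trace.re)

/-- The quantum guesswork: infimum of `Ĝ` over all POVMs indexed by `S_n`. -/
def QGuesswork {d n : ℕ} (ρ : Fin n → Matrix (Fin d) (Fin d) ℂ) (p : Fin n → ℝ) : ℝ :=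
  ⨅ E : {E : Equiv.Perm (Fin n) → Matrix (Fin d) (Fin d) ℂ // IsPOVM E}, Ghat ρ p E.1

/-- The optimally ordered classical guesswork of a POVM indexed by a finite type `Y`. -/
def Gopt {d n : ℕ} (ρ : Fin n → Matrix (Fin d) (Fin d) ℂ) (p : Fin n → ℝ)
    {Y : Type*} [Fintype Y] (E : Y → Matrix (Fin d) (Fin d) ℂ) : ℝ :=
  ∑ y : Y, ⨅ τ : Equiv.Perm (Fin n),
    ∑ i : Fin n, (((τ i).val : ℝ) + 1) * p i * ((E y * ρ i).trace.re)

/-- `𝓔_σ = ∑_t (2t - n - 1) p(σ(t)) ρ_{σ(t)}`. -/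
def calE {d n : ℕ} (ρ : Fin n → Matrix (Fin d) (Fin d) ℂ) (p : Fin n → ℝ)
    (σ : Equiv.Perm (Fin n)) : Matrix (Fin d) (Fin d) ℂ :=
  ∑ t : Fin n, ((2 * ((t.val : ℝ) + 1) - n - 1) * p (σ t)) • ρ (σ t)

/-- Functional calculus `f(A)` of a real function on a Hermitian matrix
(junk value `0` if `A` is not Hermitian). -/
def herApply {d : ℕ} (f : ℝ → ℝ) (A : Matrix (Fin d) (Fin d) ℂ) :
    Matrix (Fin d) (Fin d) ℂ :=
  if hA : A.IsHermitian then
    (hA.eigenvectorUnitary : Matrix (Fin d) (Fin d) ℂ) *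
      Matrix.diagonal (fun i => (f (hA.eigenvalues i) : ℂ)) *
      star (hA.eigenvectorUnitary : Matrix (Fin d) (Fin d) ℂ)
  else 0

/-- `|A|`, the absolute value of a Hermitian matrix. -/
def matAbs {d : ℕ} (A : Matrix (Fin d) (Fin d) ℂ) : Matrix (Fin d) (Fin d) ℂ :=
  herApply (fun x => |x|) A

/-- Trace norm `‖A‖ = Re Tr |A|` of a Hermitian matrix. -/
def traceNorm {d : ℕ} (A : Matrix (Fin d) (Fin d) ℂ) : ℝ :=
  (matAbs A).trace.re

/-- The reversed permutation `σ̄(t) = σ(n+1-t)`. -/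
def permBar {n : ℕ} (σ : Equiv.Perm (Fin n)) : Equiv.Perm (Fin n) :=
  σ * Fin.revPerm

/-- `g(λ) = 1` for `λ < 0`, `1/2` for `λ = 0`, `0` for `λ > 0`. -/
def gNeg : ℝ → ℝ := fun x => if x < 0 then 1 else if x = 0 then 1 / 2 else 0

/-- Dall'Arno's POVM `E^{σ*}`. -/
def povmStar {d n : ℕ} (ρ : Fin n → Matrix (Fin d) (Fin d) ℂ) (p : Fin n → ℝ)
    (σs : Equiv.Perm (Fin n)) : Equiv.Perm (Fin n) → Matrix (Fin d) (Fin d) ℂ :=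
  fun σ => if σ = σs ∨ σ = permBar σs then herApply gNeg (calE ρ p σ) else 0



/-- Shannon entropy in bits. -/
def shannonH {n : ℕ} (p : Fin n → ℝ) : ℝ := -∑ x, p x * Real.logb 2 (p x)

/-- Von Neumann entropy in bits (junk value `0` for non-Hermitian matrices). -/
def vonNeumann {d : ℕ} (A : Matrix (Fin d) (Fin d) ℂ) : ℝ :=
  if hA : A.IsHermitian then -∑ i, hA.eigenvalues i * Real.logb 2 (hA.eigenvalues i) else 0

/-- Holevo information of the ensemble, in bits. -/
def holevoInfo {d n : ℕ} (ρ : Fin n → Matrix (Fin d) (Fin d) ℂ) (p : Fin n → ℝ) : ℝ :=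
  vonNeumann (∑ x, p x • ρ x) - ∑ x, p x * vonNeumann (ρ x)


lemma qg_log_integral {κ : Type*} [Fintype κ] (c r s : κ → ℝ) (hr : ∀ k, 0 ≤ r k)
    (hsupp : ∀ k, c k ≠ 0 → r k ≠ 0 → 0 < s k)
    (hsum : ∑ k, c k * r k = 0)
    (hq : ∀ t : ℝ, 0 < t → 0 ≤ ∑ k, c k * (r k ^ 2 / (s k + t * r k))) :
    0 ≤ ∑ k, c k * (r k * (Real.log (r k) - Real.log (s k))) := by
  have hcase : ∀ k, c k = 0 ∨ r k = 0 ∨ (0 < r k ∧ 0 < s k) := by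
    intro k
    by_cases hc : c k = 0
    · exact Or.inl hc
    by_cases h0 : r k = 0
    · exact Or.inr (Or.inl h0)
    exact Or.inr (Or.inr ⟨lt_of_le_of_ne (hr k) (Ne.symm h0), hsupp k hc h0⟩)
  set F : ℝ → ℝ := fun t => ∑ k, c k * (r k * Real.log (s k + t * r k)) with hF
  have hder : ∀ t : ℝ, 0 ≤ t → HasDerivAt F (∑ k, c k * (r k ^ 2 / (s k + t * r k))) t := by
    intro t ht
    refine HasDerivAt.fun_sum (fun k _ => ?_)
    rcases hcase k with h | h | ⟨h1, h2⟩
    · simpa [h] using hasDerivAt_const t (0 : ℝ)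
    · simpa [h] using hasDerivAt_const t (0 : ℝ)
    · have hpos : 0 < s k + t * r k := by positivity
      have h3 : HasDerivAt (fun t : ℝ => s k + t * r k) (r k) t := by
        simpa using ((hasDerivAt_id t).mul_const (r k)).const_add (s k)
      refine (((h3.log hpos.ne').const_mul (r k)).const_mul (c k)).congr_deriv ?_
      rw [pow_two, mul_div_assoc]
  have hmono : MonotoneOn F (Set.Ici 0) := by
    refine monotoneOn_of_deriv_nonneg (convex_Ici 0)
      (fun t ht => (hder t ht).continuousAt.continuousWithinAt) ?_ ?_
    · intro t ht
      rw [interior_Ici] at ht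
      exact (hder t (le_of_lt ht)).differentiableAt.differentiableWithinAt
    · intro t ht
      rw [interior_Ici] at ht
      rw [(hder t (le_of_lt ht)).deriv]
      exact hq t ht
  have hT : ∀ ε : ℝ, 0 < ε → F 0 ≤ ∑ k, c k * (r k * Real.log (ε * s k + r k)) := by
    intro ε hε
    have h1 : F 0 ≤ F ε⁻¹ := hmono (by simp) (by simp [hε.le]) (by positivity)
    refine h1.trans (le_of_eq ?_)
    have h2 : ∀ k, c k * (r k * Real.log (s k + ε⁻¹ * r k)) =
        c k * (r k * Real.log (ε * s k + r k)) - Real.log ε * (c k * r k) := by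
      intro k
      rcases hcase k with h | h | ⟨h1, h2⟩
      · simp [h]
      · simp [h]
      · have : s k + ε⁻¹ * r k = (ε * s k + r k) / ε := by field_simp
        rw [this, Real.log_div (by positivity) hε.ne']
        ring
    simp only [hF]
    rw [Finset.sum_congr rfl (fun k _ => h2 k), Finset.sum_sub_distrib, ← Finset.mul_sum, hsum]
    ring
  have hlim : Filter.Tendsto (fun ε : ℝ => ∑ k, c k * (r k * Real.log (ε * s k + r k)))
      (nhdsWithin 0 (Set.Ioi 0)) (nhds (∑ k, c k * (r k * Real.log (r k)))) := by
    refine tendsto_finsetSum _ (fun k _ => ?_)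
    refine Filter.Tendsto.const_mul _ ?_
    rcases eq_or_ne (r k) 0 with h | h
    · simp [h]
    refine Filter.Tendsto.const_mul _ ?_
    have hc : ContinuousAt (fun ε : ℝ => Real.log (ε * s k + r k)) 0 := by
      refine ContinuousAt.log (by fun_prop) (by simpa using h)
    have := hc.tendsto.mono_left (nhdsWithin_le_nhds (s := Set.Ioi 0))
    simpa using this
  have hfin : F 0 ≤ ∑ k, c k * (r k * Real.log (r k)) := by
    refine ge_of_tendsto hlim ?_
    filter_upwards [self_mem_nhdsWithin] with ε hε using hT ε hε
  have : ∑ k, c k * (r k * (Real.log (r k) - Real.log (s k))) =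
      (∑ k, c k * (r k * Real.log (r k))) - F 0 := by
    simp only [hF]
    rw [← Finset.sum_sub_distrib]
    refine Finset.sum_congr rfl (fun k _ => ?_)
    simp; ring
  rw [this]; linarith

open scoped MatrixOrder in
/-- trace of a product of two positive semidefinite matrices -/
lemma qg_trace_mul_nonneg {d : ℕ} {A B : Matrix (Fin d) (Fin d) ℂ} (hA : A.PosSemidef)
    (hB : B.PosSemidef) : 0 ≤ (A * B).trace.re := by
  obtain ⟨C, hC⟩ := CStarAlgebra.nonneg_iff_eq_star_mul_self.mp hB.nonneg
  rw [Matrix.star_eq_conjTranspose] at hC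
  subst hC
  rw [← Matrix.mul_assoc, Matrix.trace_mul_comm, ← Matrix.mul_assoc]
  exact (Complex.le_def.1 (hA.mul_mul_conjTranspose_same C).trace_nonneg).1

/-- geometric-type subdistribution -/
lemma qg_subdist (n : ℕ) (m : ℝ) (hm : 0 < m) :
    ∑ t : Fin n, Real.exp (-((t.val : ℝ) + 1 / 2) / m) / m ≤ 1 := by
  have key : ∀ k : ℕ, Real.exp (-((k : ℝ) + 1 / 2) / m) / m ≤
      Real.exp (-(k : ℝ) / m) - Real.exp (-((k + 1 : ℕ) : ℝ) / m) := by
    intro k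
    have h1 : 1 / (2 * m) ≤ Real.sinh (1 / (2 * m)) :=
      Real.self_le_sinh_iff.2 (by positivity)
    rw [Real.sinh_eq] at h1
    have e1 : Real.exp (-(k : ℝ) / m) = Real.exp (-((k : ℝ) + 1 / 2) / m) *
        Real.exp (1 / (2 * m)) := by
      rw [← Real.exp_add]; congr 1; field_simp; ring
    have e2 : Real.exp (-((k + 1 : ℕ) : ℝ) / m) = Real.exp (-((k : ℝ) + 1 / 2) / m) *
        Real.exp (-(1 / (2 * m))) := by
      rw [← Real.exp_add]; congr 1; push_cast; field_simp; ring
    rw [e1, e2, ← mul_sub, div_eq_mul_inv]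
    refine mul_le_mul_of_nonneg_left ?_ (Real.exp_pos _).le
    have : m⁻¹ = 2 * (1 / (2 * m)) := by field_simp
    linarith
  rw [Fin.sum_univ_eq_sum_range (fun k : ℕ => Real.exp (-((k : ℝ) + 1 / 2) / m) / m)]
  calc _ ≤ ∑ k ∈ range n, (Real.exp (-(k : ℝ) / m) - Real.exp (-((k + 1 : ℕ) : ℝ) / m)) :=
        Finset.sum_le_sum (fun k _ => key k)
    _ = Real.exp (-((0 : ℕ) : ℝ) / m) - Real.exp (-(n : ℝ) / m) :=
        Finset.sum_range_sub' (fun k : ℕ => Real.exp (-(k : ℝ) / m)) n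
    _ ≤ 1 := by simp; positivity

lemma qg_gibbs {P Q r : ℝ} (hP : 0 ≤ P) (hQ : 0 ≤ Q) (hPQ : 0 < P → 0 < Q) (hr : 0 < r) :
    P * (Real.log Q - Real.log P) ≤ r * Q - P - P * Real.log r := by
  rcases hP.eq_or_lt with h | h
  · rw [← h]; simp; positivity
  · have hQ' := hPQ h
    have := Real.log_le_sub_one_of_pos (show 0 < r * Q / P by positivity)
    rw [Real.log_div (by positivity) (by positivity), Real.log_mul hr.ne' hQ'.ne'] at this
    have h2 := mul_le_mul_of_nonneg_left this h.le
    have h3 : P * (r * Q / P - 1) = r * Q - P := by field_simp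
    rw [h3] at h2
    linarith

lemma qg_trace_diag {d : ℕ} (r : Fin d → ℝ) (A B : Matrix (Fin d) (Fin d) ℂ) :
    (diagonal (fun i => (r i : ℂ)) * (A * Bᴴ)).trace.re =
      ∑ i, ∑ j, r i * (A i j * star (B i j)).re := by
  simp only [Matrix.trace, Matrix.diag, Matrix.diagonal_mul, Complex.re_sum,
    Complex.re_ofReal_mul]
  refine Finset.sum_congr rfl (fun i _ => ?_)
  rw [Matrix.mul_apply, Complex.re_sum, Finset.mul_sum]
  rfl

lemma qg_trace_sum {d : ℕ} {Y : Type*} [Fintype Y] (x : Y → ℝ)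
    (E : Y → Matrix (Fin d) (Fin d) ℂ) (ρ : Matrix (Fin d) (Fin d) ℂ) :
    ((∑ y, (x y : ℂ) • E y) * ρ).trace.re = ∑ y, x y * (E y * ρ).trace.re := by
  simp [Finset.sum_mul, Matrix.trace_sum]

/-- Operator Jensen for the square, in trace form. -/
lemma qg_sq_le {d : ℕ} {Y : Type*} [Fintype Y] (x : Y → ℝ)
    (E : Y → Matrix (Fin d) (Fin d) ℂ) (hE : ∀ y, (E y).PosSemidef) (hE1 : ∑ y, E y = 1)
    (ρ : Matrix (Fin d) (Fin d) ℂ) (hρ : ρ.PosSemidef) (X : Matrix (Fin d) (Fin d) ℂ)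
    (hX : X = ∑ y, (x y : ℂ) • E y) (hXh : Xᴴ = X) :
    (ρ * (X * X)).trace.re ≤ ∑ y, x y ^ 2 * (E y * ρ).trace.re := by
  have h1 : ∀ y, 0 ≤ (ρ * (((x y : ℂ) • 1 - X) * E y * ((x y : ℂ) • 1 - X))).trace.re := by
    intro y
    refine qg_trace_mul_nonneg hρ ?_
    have := (hE y).mul_mul_conjTranspose_same ((x y : ℂ) • 1 - X)
    simpa [hXh] using this
  have h2 : ∑ y, (((x y : ℂ) • 1 - X) * E y * ((x y : ℂ) • 1 - X)) =
      (∑ y, ((x y ^ 2 : ℝ) : ℂ) • E y) - X * X := by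
    have : ∀ y, (((x y : ℂ) • 1 - X) * E y * ((x y : ℂ) • 1 - X)) =
        ((x y ^ 2 : ℝ) : ℂ) • E y - X * ((x y : ℂ) • E y) - ((x y : ℂ) • E y) * X
          + X * E y * X := by
      intro y
      simp only [sub_mul, mul_sub, smul_mul_assoc, mul_smul_comm, one_mul, mul_one, smul_sub,
        smul_smul, Complex.ofReal_mul, pow_two]
      abel
    rw [Finset.sum_congr rfl (fun y _ => this y), Finset.sum_add_distrib, Finset.sum_sub_distrib,
      Finset.sum_sub_distrib, ← Finset.mul_sum, ← Finset.sum_mul, ← hX, ← Finset.sum_mul,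
      ← Finset.mul_sum, hE1]
    simp
  have h3 := Finset.sum_nonneg (fun y (_ : y ∈ (Finset.univ : Finset Y)) => h1 y)
  rw [← Complex.re_sum, ← Matrix.trace_sum, ← Finset.mul_sum, h2, mul_sub, Matrix.trace_sub,
    Complex.sub_re, Matrix.trace_mul_comm ρ (∑ y, _), qg_trace_sum] at h3
  linarith

lemma qg_term (M K : ℂ) (a b : ℝ) (hb : b = 0 → a = 0) (hb0 : 0 ≤ b) :
    2 * (a * (M * star K).re) - b * (M * star M).re ≤ ‖K‖ ^ 2 * (a ^ 2 / b) := by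
  rcases hb0.eq_or_lt with h | h
  · simp [← h, hb h.symm]
  · have e1 : ‖K‖ ^ 2 = K.re ^ 2 + K.im ^ 2 := by
      rw [← Complex.normSq_eq_norm_sq, Complex.normSq_apply]; ring
    rw [e1, ← mul_div_assoc, le_div_iff₀ h]
    simp only [Complex.mul_re, Complex.star_def, Complex.conj_re, Complex.conj_im]
    nlinarith [sq_nonneg (b * M.re - a * K.re), sq_nonneg (b * M.im - a * K.im)]

lemma qg_quad {d : ℕ} {Y : Type*} [Fintype Y] (E : Y → Matrix (Fin d) (Fin d) ℂ)
    (hE : ∀ y, (E y).PosSemidef) (hE1 : ∑ y, E y = 1)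
    (ρ σ U V : Matrix (Fin d) (Fin d) ℂ) (r s : Fin d → ℝ)
    (hr : ∀ i, 0 ≤ r i) (hs : ∀ i, 0 ≤ s i)
    (hU : U * Uᴴ = 1) (hV : V * Vᴴ = 1)
    (hρ : ρ = U * diagonal (fun i => (r i : ℂ)) * Uᴴ)
    (hσ : σ = V * diagonal (fun i => (s i : ℂ)) * Vᴴ)
    (hρp : ρ.PosSemidef) (hσp : σ.PosSemidef) (t : ℝ) (ht : 0 < t) :
    ∑ y, (E y * ρ).trace.re ^ 2 / ((E y * σ).trace.re + t * (E y * ρ).trace.re) ≤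
      ∑ i, ∑ j, ‖(Uᴴ * V) i j‖ ^ 2 * (r i ^ 2 / (s j + t * r i)) := by
  set P : Y → ℝ := fun y => (E y * ρ).trace.re with hP
  set Q : Y → ℝ := fun y => (E y * σ).trace.re with hQ
  have hP0 : ∀ y, 0 ≤ P y := fun y => qg_trace_mul_nonneg (hE y) hρp
  have hQ0 : ∀ y, 0 ≤ Q y := fun y => qg_trace_mul_nonneg (hE y) hσp
  set x : Y → ℝ := fun y => P y / (Q y + t * P y) with hx
  set X : Matrix (Fin d) (Fin d) ℂ := ∑ y, (x y : ℂ) • E y with hX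
  have hXh : Xᴴ = X := by
    rw [hX, Matrix.conjTranspose_sum]
    refine Finset.sum_congr rfl (fun y _ => ?_)
    rw [Matrix.conjTranspose_smul, (hE y).1.eq]
    simp
  have s1 := qg_sq_le x E hE hE1 ρ hρp X hX hXh
  have s2 := qg_sq_le x E hE hE1 σ hσp X hX hXh
  have s3 := qg_trace_sum x E ρ
  rw [← hX] at s3
  have s4 : ∑ y, P y ^ 2 / (Q y + t * P y) =
      2 * (∑ y, x y * P y) - (∑ y, x y ^ 2 * Q y) - t * ∑ y, x y ^ 2 * P y := by
    rw [Finset.mul_sum, Finset.mul_sum, ← Finset.sum_sub_distrib, ← Finset.sum_sub_distrib]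
    refine Finset.sum_congr rfl (fun y _ => ?_)
    simp only [hx]
    rcases eq_or_ne (Q y + t * P y) 0 with h | h
    · simp [h]
    · have e : P y / (Q y + t * P y) * (Q y + t * P y) = P y := div_mul_cancel₀ _ h
      have e2 : P y ^ 2 / (Q y + t * P y) = P y / (Q y + t * P y) * P y := by ring
      rw [e2]
      linear_combination ((P y / (Q y + t * P y))) * e
  set M := Uᴴ * X * V with hM
  set K := Uᴴ * V with hK
  have t1 : (X * ρ).trace.re = ∑ i, ∑ j, r i * (M i j * star (K i j)).re := by
    rw [← qg_trace_diag]
    have : M * Kᴴ = Uᴴ * X * U := by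
      rw [hM, hK, Matrix.conjTranspose_mul, Matrix.conjTranspose_conjTranspose]
      calc Uᴴ * X * V * (Vᴴ * U) = Uᴴ * X * (V * Vᴴ) * U := by simp only [Matrix.mul_assoc]
        _ = _ := by rw [hV, Matrix.mul_one]
    rw [this, Matrix.trace_mul_comm, hρ, Matrix.mul_assoc U, Matrix.mul_assoc U,
      Matrix.trace_mul_comm U]
    simp only [Matrix.mul_assoc]
  have hMh : Mᴴ = Vᴴ * X * U := by
    rw [hM]; simp [Matrix.conjTranspose_mul, hXh, Matrix.mul_assoc]
  have t2 : (ρ * (X * X)).trace.re = ∑ i, ∑ j, r i * (M i j * star (M i j)).re := by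
    rw [← qg_trace_diag]
    have : M * Mᴴ = Uᴴ * (X * X) * U := by
      rw [hMh, hM]
      calc Uᴴ * X * V * (Vᴴ * X * U) = Uᴴ * X * (V * Vᴴ) * X * U := by
            simp only [Matrix.mul_assoc]
        _ = _ := by rw [hV, Matrix.mul_one]; simp only [Matrix.mul_assoc]
    rw [this, hρ, Matrix.mul_assoc U, Matrix.mul_assoc U, Matrix.trace_mul_comm U]
    simp only [Matrix.mul_assoc]
  have t3 : (σ * (X * X)).trace.re = ∑ i, ∑ j, s j * (M i j * star (M i j)).re := by
    have h := qg_trace_diag s Mᴴ Mᴴ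
    rw [Matrix.conjTranspose_conjTranspose] at h
    have h' : Mᴴ * M = Vᴴ * (X * X) * V := by
      rw [hMh, hM]
      calc Vᴴ * X * U * (Uᴴ * X * V) = Vᴴ * X * (U * Uᴴ) * X * V := by
            simp only [Matrix.mul_assoc]
        _ = _ := by rw [hU, Matrix.mul_one]; simp only [Matrix.mul_assoc]
    rw [h'] at h
    rw [Finset.sum_comm]
    have h4 : (σ * (X * X)).trace.re =
        (diagonal (fun i => (s i : ℂ)) * (Vᴴ * (X * X) * V)).trace.re := by
      rw [hσ, Matrix.mul_assoc V, Matrix.mul_assoc V, Matrix.trace_mul_comm V]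
      simp only [Matrix.mul_assoc]
    rw [h4, h]
    refine Finset.sum_congr rfl (fun i _ => Finset.sum_congr rfl (fun j _ => ?_))
    rw [Matrix.conjTranspose_apply, star_star, mul_comm (star _)]
  have t4 : 2 * (X * ρ).trace.re - (σ * (X * X)).trace.re - t * (ρ * (X * X)).trace.re ≤
      ∑ i, ∑ j, ‖K i j‖ ^ 2 * (r i ^ 2 / (s j + t * r i)) := by
    rw [t1, t2, t3]
    simp only [Finset.mul_sum]
    simp only [← Finset.sum_sub_distrib]
    refine Finset.sum_le_sum (fun i _ => Finset.sum_le_sum (fun j _ => ?_))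
    have := qg_term (M i j) (K i j) (r i) (s j + t * r i) 
      (fun h => by
        have h1 := hs j
        have h2 := mul_nonneg ht.le (hr i)
        have h3 : t * r i = 0 := by linarith
        rcases mul_eq_zero.1 h3 with h | h
        · exact absurd h ht.ne'
        · exact h)
      (add_nonneg (hs j) (mul_nonneg ht.le (hr i)))
    linarith
  calc _ = 2 * (∑ y, x y * P y) - (∑ y, x y ^ 2 * Q y) - t * ∑ y, x y ^ 2 * P y := s4
    _ ≤ 2 * (X * ρ).trace.re - (σ * (X * X)).trace.re - t * (ρ * (X * X)).trace.re := by
      rw [s3]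
      have := mul_le_mul_of_nonneg_left s1 ht.le
      simp only [hP, hQ] at *
      linarith
    _ ≤ _ := t4

lemma qg_holevo {d : ℕ} {Y : Type*} [Fintype Y] (E : Y → Matrix (Fin d) (Fin d) ℂ)
    (hE : ∀ y, (E y).PosSemidef) (hE1 : ∑ y, E y = 1)
    (ρ σ U V : Matrix (Fin d) (Fin d) ℂ) (r s : Fin d → ℝ)
    (hr : ∀ i, 0 ≤ r i) (hs : ∀ i, 0 ≤ s i)
    (hU : U * Uᴴ = 1) (hV : V * Vᴴ = 1)
    (hρ : ρ = U * diagonal (fun i => (r i : ℂ)) * Uᴴ)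
    (hσ : σ = V * diagonal (fun i => (s i : ℂ)) * Vᴴ)
    (hρp : ρ.PosSemidef) (hσp : σ.PosSemidef) (c : ℝ) (hc : 0 < c)
    (hdom : (σ - (c : ℂ) • ρ).PosSemidef) :
    ∑ y, (E y * ρ).trace.re * (Real.log (E y * ρ).trace.re - Real.log (E y * σ).trace.re) ≤
      ∑ i, r i * Real.log (r i) - ∑ j, ((Vᴴ * ρ * V) j j).re * Real.log (s j) := by
  have hU' : Uᴴ * U = 1 := mul_eq_one_comm.1 hU
  have hV' : Vᴴ * V = 1 := mul_eq_one_comm.1 hV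
  set K := Uᴴ * V with hK
  set w : Fin d → Fin d → ℝ := fun i j => ‖K i j‖ ^ 2 with hw
  have hKK : K * Kᴴ = 1 := by
    rw [hK, Matrix.conjTranspose_mul, Matrix.conjTranspose_conjTranspose]
    calc Uᴴ * V * (Vᴴ * U) = Uᴴ * (V * Vᴴ) * U := by simp only [Matrix.mul_assoc]
      _ = 1 := by rw [hV, Matrix.mul_one, hU']
  have hnorm : ∀ z : ℂ, (z * star z) = ((‖z‖ ^ 2 : ℝ) : ℂ) := by
    intro z
    rw [Complex.star_def, Complex.mul_conj, Complex.normSq_eq_norm_sq]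
  have hw1 : ∀ i, ∑ j, w i j = 1 := by
    intro i
    have h : (K * Kᴴ) i i = 1 := by rw [hKK]; simp
    rw [Matrix.mul_apply] at h
    have h2 : ((∑ j, w i j : ℝ) : ℂ) = 1 := by
      rw [← h, Complex.ofReal_sum]
      refine Finset.sum_congr rfl (fun j _ => ?_)
      rw [Matrix.conjTranspose_apply, hnorm]
    exact_mod_cast h2
  have hw2 : ∀ j, ∑ i, w i j * r i = ((Vᴴ * ρ * V) j j).re := by
    intro j
    have h : Vᴴ * ρ * V = Kᴴ * (diagonal (fun i => (r i : ℂ)) * K) := by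
      rw [hρ, hK, Matrix.conjTranspose_mul, Matrix.conjTranspose_conjTranspose]
      simp only [Matrix.mul_assoc]
    rw [h, Matrix.mul_apply, Complex.re_sum]
    refine Finset.sum_congr rfl (fun i _ => ?_)
    rw [Matrix.diagonal_mul, Matrix.conjTranspose_apply, mul_comm (star _), mul_assoc, hnorm,
      ← Complex.ofReal_mul, Complex.ofReal_re, mul_comm]
  have hw0 : ∀ i j, 0 ≤ w i j := fun i j => by positivity
  have hdiag : ∀ j, c * ∑ i, w i j * r i ≤ s j := by
    intro j
    have h := (hdom.conjTranspose_mul_mul_same V).diag_nonneg (i := j)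
    have h2 : Vᴴ * (σ - (c : ℂ) • ρ) * V =
        diagonal (fun i => (s i : ℂ)) - (c : ℂ) • (Vᴴ * ρ * V) := by
      rw [mul_sub, sub_mul, mul_smul_comm, smul_mul_assoc, hσ]
      congr 1
      calc Vᴴ * (V * diagonal (fun i => (s i : ℂ)) * Vᴴ) * V
          = (Vᴴ * V) * diagonal (fun i => (s i : ℂ)) * (Vᴴ * V) := by
            simp only [Matrix.mul_assoc]
        _ = _ := by rw [hV', Matrix.one_mul, Matrix.mul_one]
    rw [h2] at h
    have h3 := (Complex.le_def.1 h).1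
    rw [Matrix.sub_apply, Matrix.smul_apply, Matrix.diagonal_apply_eq, Complex.sub_re,
      smul_eq_mul, Complex.re_ofReal_mul, ← hw2, Complex.ofReal_re, Complex.zero_re] at h3
    linarith
  have hP0 : ∀ y, 0 ≤ (E y * ρ).trace.re := fun y => qg_trace_mul_nonneg (hE y) hρp
  have hQP : ∀ y, c * (E y * ρ).trace.re ≤ (E y * σ).trace.re := by
    intro y
    have h := qg_trace_mul_nonneg (hE y) hdom
    rw [mul_sub, mul_smul_comm, Matrix.trace_sub, Matrix.trace_smul, Complex.sub_re,
      smul_eq_mul, Complex.re_ofReal_mul] at h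
    linarith
  have htr : ∑ y, (E y * ρ).trace.re = ∑ i, r i := by
    rw [← Complex.re_sum, ← Matrix.trace_sum, ← Finset.sum_mul, hE1, Matrix.one_mul, hρ,
      Matrix.trace_mul_comm, ← Matrix.mul_assoc, hU', Matrix.one_mul, Matrix.trace_diagonal,
      Complex.re_sum]
    simp
  have hmain := qg_log_integral (κ := (Fin d × Fin d) ⊕ Y)
    (Sum.elim (fun q => w q.1 q.2) (fun _ => -1))
    (Sum.elim (fun q => r q.1) (fun y => (E y * ρ).trace.re))
    (Sum.elim (fun q => s q.2) (fun y => (E y * σ).trace.re))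
    (by
      rintro (⟨i, j⟩ | y)
      · exact hr i
      · exact hP0 y)
    (by
      rintro (⟨i, j⟩ | y) h1 h2
      · simp only [Sum.elim_inl] at h1 h2 ⊢
        have a1 : 0 < w i j * r i :=
          mul_pos (lt_of_le_of_ne (hw0 i j) (Ne.symm h1)) (lt_of_le_of_ne (hr i) (Ne.symm h2))
        have a2 : w i j * r i ≤ ∑ i, w i j * r i :=
          Finset.single_le_sum (f := fun i => w i j * r i)
            (fun i _ => mul_nonneg (hw0 i j) (hr i)) (Finset.mem_univ i)
        exact lt_of_lt_of_le (mul_pos hc (lt_of_lt_of_le a1 a2)) (hdiag j)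
      · simp only [Sum.elim_inr] at h2 ⊢
        exact lt_of_lt_of_le (mul_pos hc (lt_of_le_of_ne (hP0 y) (Ne.symm h2))) (hQP y))
    (by
      simp only [Fintype.sum_sum_type, Fintype.sum_prod_type, Sum.elim_inl, Sum.elim_inr,
        ← Finset.sum_mul, hw1, neg_mul, one_mul, Finset.sum_neg_distrib, htr]
      ring)
    (by
      intro t ht
      have := qg_quad E hE hE1 ρ σ U V r s hr hs hU hV hρ hσ hρp hσp t ht
      simp only [Fintype.sum_sum_type, Fintype.sum_prod_type, Sum.elim_inl, Sum.elim_inr,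
        neg_mul, one_mul, Finset.sum_neg_distrib]
      linarith)
  simp only [Fintype.sum_sum_type, Fintype.sum_prod_type, Sum.elim_inl, Sum.elim_inr,
        neg_mul, one_mul, Finset.sum_neg_distrib] at hmain
  have hfin : ∑ i, ∑ j, w i j * (r i * (Real.log (r i) - Real.log (s j))) =
      ∑ i, r i * Real.log (r i) - ∑ j, ((Vᴴ * ρ * V) j j).re * Real.log (s j) := by
    have e1 : ∀ i, r i * Real.log (r i) = ∑ j, w i j * (r i * Real.log (r i)) := by
      intro i; rw [← Finset.sum_mul, hw1, one_mul]
    have e2 : ∀ j, ((Vᴴ * ρ * V) j j).re * Real.log (s j) =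
        ∑ i, w i j * (r i * Real.log (s j)) := by
      intro j; rw [← hw2, Finset.sum_mul]
      exact Finset.sum_congr rfl (fun i _ => by ring)
    rw [Finset.sum_congr rfl (fun i _ => e1 i), Finset.sum_congr rfl (fun j _ => e2 j),
      Finset.sum_comm (s := (Finset.univ : Finset (Fin d))) (t := Finset.univ)
        (f := fun j i => w i j * (r i * Real.log (s j))), ← Finset.sum_sub_distrib]
    refine Finset.sum_congr rfl (fun i _ => ?_)
    rw [← Finset.sum_sub_distrib]
    exact Finset.sum_congr rfl (fun j _ => by ring)
  linarith

lemma qg_spec {d : ℕ} {A : Matrix (Fin d) (Fin d) ℂ} (hA : A.IsHermitian) :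
    A = (hA.eigenvectorUnitary : Matrix (Fin d) (Fin d) ℂ) *
      diagonal (fun i => (hA.eigenvalues i : ℂ)) *
      (hA.eigenvectorUnitary : Matrix (Fin d) (Fin d) ℂ)ᴴ := by
  have := hA.spectral_theorem
  rw [Unitary.conjStarAlgAut_apply] at this
  exact this

lemma qg_vonNeumann {d : ℕ} {A : Matrix (Fin d) (Fin d) ℂ} (hA : A.IsHermitian) :
    Real.log 2 * vonNeumann A = -∑ i, hA.eigenvalues i * Real.log (hA.eigenvalues i) := by
  have h2 : Real.log 2 ≠ 0 := (Real.log_pos (by norm_num)).ne'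
  rw [vonNeumann, dif_pos hA, mul_neg, Finset.mul_sum]
  congr 1
  refine Finset.sum_congr rfl (fun i _ => ?_)
  rw [Real.logb]; field_simp

/-- Holevo bound. -/
lemma qg_holevo_bound {d n : ℕ} {Y : Type*} [Fintype Y]
    (ρ : Fin n → Matrix (Fin d) (Fin d) ℂ) (p : Fin n → ℝ)
    (hρ : ∀ x, (ρ x).PosSemidef)
    (hp : ∀ x, 0 ≤ p x) (E : Y → Matrix (Fin d) (Fin d) ℂ) (hE : IsPOVM E) :
    ∑ x, p x * ∑ y, (E y * ρ x).trace.re *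
      (Real.log (E y * ρ x).trace.re - Real.log (E y * ∑ x, p x • ρ x).trace.re) ≤
    Real.log 2 * holevoInfo ρ p := by
  set σ := ∑ x, p x • ρ x with hσ
  have hterm : ∀ x, (p x • ρ x).PosSemidef := fun x => (hρ x).smul (hp x)
  have hσp : σ.PosSemidef := posSemidef_sum _ (fun x _ => hterm x)
  set V := (hσp.1.eigenvectorUnitary : Matrix (Fin d) (Fin d) ℂ) with hV
  have hVV : V * Vᴴ = 1 := Unitary.coe_mul_star_self _
  set s := hσp.1.eigenvalues with hs
  have hspec : σ = V * diagonal (fun i => (s i : ℂ)) * Vᴴ := qg_spec hσp.1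
  have hVV' : Vᴴ * V = 1 := mul_eq_one_comm.1 hVV
  have hx : ∀ x, p x * ∑ y, (E y * ρ x).trace.re *
      (Real.log (E y * ρ x).trace.re - Real.log (E y * σ).trace.re) ≤
      p x * (∑ i, (hρ x).1.eigenvalues i * Real.log ((hρ x).1.eigenvalues i) -
        ∑ j, ((Vᴴ * ρ x * V) j j).re * Real.log (s j)) := by
    intro x
    rcases (hp x).eq_or_lt with h | h
    · simp [← h]
    · refine mul_le_mul_of_nonneg_left ?_ (hp x)
      refine qg_holevo E hE.1 hE.2 (ρ x) σ (hρ x).1.eigenvectorUnitary V _ s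
        (hρ x).eigenvalues_nonneg hσp.eigenvalues_nonneg (Unitary.coe_mul_star_self _) hVV
        (qg_spec (hρ x).1) hspec (hρ x) hσp (p x) h ?_
      have : σ - ((p x : ℝ) : ℂ) • ρ x = ∑ z ∈ Finset.univ.erase x, p z • ρ z := by
        rw [hσ, ← Finset.add_sum_erase _ _ (Finset.mem_univ x), Complex.coe_smul]
        abel
      rw [this]
      exact posSemidef_sum _ (fun x _ => hterm x)
  refine (Finset.sum_le_sum (fun x _ => hx x)).trans (le_of_eq ?_)
  have hs2 : ∀ j, ∑ x, p x * ((Vᴴ * ρ x * V) j j).re = s j := by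
    intro j
    have h1 : Vᴴ * σ * V = diagonal (fun i => (s i : ℂ)) := by
      calc Vᴴ * σ * V = Vᴴ * (V * diagonal (fun i => (s i : ℂ)) * Vᴴ) * V := by rw [← hspec]
        _ = (Vᴴ * V) * diagonal (fun i => (s i : ℂ)) * (Vᴴ * V) := by
            simp only [Matrix.mul_assoc]
        _ = _ := by rw [hVV', Matrix.one_mul, Matrix.mul_one]
    have h2 : Vᴴ * σ * V = ∑ x, p x • (Vᴴ * ρ x * V) := by
      rw [hσ, Finset.mul_sum, Finset.sum_mul]
      simp only [mul_smul_comm, smul_mul_assoc]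
    have h3 := congrFun (congrFun (h2.symm.trans h1) j) j
    rw [Matrix.sum_apply, Matrix.diagonal_apply_eq] at h3
    have h4 := congrArg Complex.re h3
    rw [Complex.re_sum, Complex.ofReal_re] at h4
    rw [← h4]
    refine Finset.sum_congr rfl (fun x _ => ?_)
    rw [Matrix.smul_apply, Complex.smul_re, smul_eq_mul]
  rw [holevoInfo, mul_sub, ← hσ, qg_vonNeumann hσp.1, Finset.mul_sum]
  have e1 : ∀ x, Real.log 2 * (p x * vonNeumann (ρ x)) =
      -(p x * ∑ i, (hρ x).1.eigenvalues i * Real.log ((hρ x).1.eigenvalues i)) := by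
    intro x
    have := qg_vonNeumann (hρ x).1
    rw [mul_left_comm, this]; ring
  rw [Finset.sum_congr rfl (fun x _ => e1 x)]
  simp only [mul_sub, Finset.sum_sub_distrib, Finset.sum_neg_distrib]
  have e2 : ∑ x, p x * ∑ j, ((Vᴴ * ρ x * V) j j).re * Real.log (s j) =
      ∑ j, s j * Real.log (s j) := by
    simp only [Finset.mul_sum]
    rw [Finset.sum_comm]
    refine Finset.sum_congr rfl (fun j _ => ?_)
    rw [← hs2 j, Finset.sum_mul]
    refine Finset.sum_congr rfl (fun x _ => ?_)
    rw [hs2 j]; ring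
  rw [e2]
  ring

lemma qg_Ghat_bound {d n : ℕ}
    (ρ : Fin n → Matrix (Fin d) (Fin d) ℂ) (p : Fin n → ℝ)
    (hρ : ∀ x, (ρ x).PosSemidef) (hρtr : ∀ x, (ρ x).trace = 1)
    (hp : ∀ x, 0 ≤ p x) (hpsum : ∑ x, p x = 1)
    (E : Equiv.Perm (Fin n) → Matrix (Fin d) (Fin d) ℂ) (hE : IsPOVM E) :
    (2 : ℝ) ^ (shannonH p - holevoInfo ρ p) / Real.exp 1 + 1 / 2 ≤ Ghat ρ p E := by
  have hhol := qg_holevo_bound ρ p hρ hp E hE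
  set σ := ∑ x, p x • ρ x with hσ
  set T : Equiv.Perm (Fin n) → Fin n → ℝ := fun y x => (E y * ρ x).trace.re with hT
  set Q : Equiv.Perm (Fin n) → ℝ := fun y => (E y * σ).trace.re with hQ
  have hT0 : ∀ y x, 0 ≤ T y x := fun y x => qg_trace_mul_nonneg (hE.1 y) (hρ x)
  have hTsum : ∀ x, ∑ y, T y x = 1 := by
    intro x
    simp only [hT]
    rw [← Complex.re_sum, ← Matrix.trace_sum, ← Finset.sum_mul, hE.2, Matrix.one_mul, hρtr]
    simp
  have hQsum : ∀ y, Q y = ∑ x, p x * T y x := by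
    intro y
    simp only [hQ, hT, hσ, Finset.mul_sum, Matrix.trace_sum, Complex.re_sum]
    refine Finset.sum_congr rfl (fun x _ => ?_)
    rw [mul_smul_comm, Matrix.trace_smul, Complex.smul_re, smul_eq_mul]
  have hpT : ∀ y x, 0 ≤ p x * T y x := fun y x => mul_nonneg (hp x) (hT0 y x)
  have hQ0 : ∀ y, 0 ≤ Q y := fun y => by
    rw [hQsum]; exact Finset.sum_nonneg (fun x _ => hpT y x)
  have hQ1 : ∑ y, Q y = 1 := by
    simp only [hQsum]
    rw [Finset.sum_comm]
    simp only [← Finset.mul_sum, hTsum, mul_one, hpsum]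
  have hG : Ghat ρ p E = ∑ y : Equiv.Perm (Fin n), ∑ x,
      (((y.symm x).val : ℝ) + 1) * (p x * T y x) := by
    rw [Ghat]
    refine Finset.sum_congr rfl (fun y _ => ?_)
    rw [← Equiv.sum_comp y (fun x => (((y.symm x).val : ℝ) + 1) * (p x * T y x))]
    refine Finset.sum_congr rfl (fun t _ => ?_)
    rw [Equiv.symm_apply_apply, mul_assoc]
  have hG1 : 1 ≤ Ghat ρ p E := by
    rw [hG, ← hQ1]
    refine Finset.sum_le_sum (fun y _ => ?_)
    rw [hQsum]
    refine Finset.sum_le_sum (fun x _ => ?_)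
    refine le_mul_of_one_le_left (hpT y x) ?_
    have : (0 : ℝ) ≤ ((y.symm x).val : ℝ) := Nat.cast_nonneg _
    linarith
  set m := Ghat ρ p E - 1 / 2 with hm
  have hm0 : 0 < m := by linarith
  -- conditional entropy bound
  set R : Equiv.Perm (Fin n) → Fin n → ℝ :=
    fun y x => Real.exp (-(((y.symm x).val : ℝ) + 1 / 2) / m) / m with hR
  have hR0 : ∀ y x, 0 < R y x := fun y x => div_pos (Real.exp_pos _) hm0
  have hRlog : ∀ y x, Real.log (R y x) =
      -(((y.symm x).val : ℝ) + 1 / 2) / m - Real.log m := by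
    intro y x
    simp only [hR]
    rw [Real.log_div (Real.exp_pos _).ne' hm0.ne', Real.log_exp]
  have hRsum : ∀ y, ∑ x, R y x ≤ 1 := by
    intro y
    have h := qg_subdist n m hm0
    rw [← Equiv.sum_comp y.symm (fun t : Fin n => Real.exp (-((t.val : ℝ) + 1 / 2) / m) / m)] at h
    exact h
  have hcond : ∑ y, ∑ x, (p x * T y x) * (Real.log (Q y) - Real.log (p x * T y x)) ≤
      1 + Real.log m := by
    have h1 : ∀ y x, (p x * T y x) * (Real.log (Q y) - Real.log (p x * T y x)) ≤
        R y x * Q y - p x * T y x +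
          (((((y.symm x).val : ℝ) + 1) * (p x * T y x)) / m - (p x * T y x) / (2 * m)
            + (p x * T y x) * Real.log m) := by
      intro y x
      have h := qg_gibbs (hpT y x) (hQ0 y) (fun h => by
        rw [hQsum]
        exact lt_of_lt_of_le h (Finset.single_le_sum (f := fun x => p x * T y x)
          (fun x _ => hpT y x) (Finset.mem_univ x))) (hR0 y x)
      refine h.trans (le_of_eq ?_)
      rw [hRlog]
      field_simp
      ring
    refine (Finset.sum_le_sum (fun y _ => Finset.sum_le_sum (fun x _ => h1 y x))).trans ?_
    simp only [Finset.sum_add_distrib, Finset.sum_sub_distrib, ← Finset.sum_mul,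
      ← Finset.sum_div, ← hQsum, hQ1, ← hG]
    have h2 : ∑ y, (∑ x, R y x) * Q y ≤ 1 := by
      rw [← hQ1]
      exact Finset.sum_le_sum (fun y _ => mul_le_of_le_one_left (hQ0 y) (hRsum y))
    have h3 : Ghat ρ p E / m - 1 / (2 * m) = 1 := by
      have : Ghat ρ p E = m + 1 / 2 := by rw [hm]; ring
      rw [this]; field_simp; ring
    linarith
  have hlog2 : 0 < Real.log 2 := Real.log_pos (by norm_num)
  have hH : Real.log 2 * shannonH p = -∑ x, p x * Real.log (p x) := by
    rw [shannonH, mul_neg, Finset.mul_sum]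
    congr 1
    refine Finset.sum_congr rfl (fun x _ => ?_)
    rw [Real.logb]; field_simp
  have hid : -(∑ x, p x * Real.log (p x)) -
      ∑ x, p x * ∑ y, T y x * (Real.log (T y x) - Real.log (Q y)) =
      ∑ y, ∑ x, (p x * T y x) * (Real.log (Q y) - Real.log (p x * T y x)) := by
    rw [Finset.sum_comm, ← Finset.sum_neg_distrib, ← Finset.sum_sub_distrib]
    refine Finset.sum_congr rfl (fun x _ => ?_)
    have h1 : p x * Real.log (p x) = ∑ y, p x * T y x * Real.log (p x) := by
      rw [← Finset.sum_mul, ← Finset.mul_sum, hTsum, mul_one]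
    rw [h1, Finset.mul_sum, ← Finset.sum_neg_distrib, ← Finset.sum_sub_distrib]
    refine Finset.sum_congr rfl (fun y _ => ?_)
    rcases eq_or_ne (p x) 0 with h | h
    · simp [h]
    rcases eq_or_ne (T y x) 0 with h' | h'
    · simp [h']
    rw [Real.log_mul h h']
    ring
  have hfin : Real.log 2 * (shannonH p - holevoInfo ρ p) ≤ 1 + Real.log m := by
    rw [mul_sub, hH]
    have : ∑ x, p x * ∑ y, T y x * (Real.log (T y x) - Real.log (Q y)) ≤
      Real.log 2 * holevoInfo ρ p := hhol
    linarith
  have hpow : (2 : ℝ) ^ (shannonH p - holevoInfo ρ p) ≤ m * Real.exp 1 := by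
    rw [Real.rpow_def_of_pos (by norm_num)]
    refine (Real.exp_le_exp.2 hfin).trans (le_of_eq ?_)
    rw [Real.exp_add, Real.exp_log hm0, mul_comm]
  have := (div_le_iff₀ (Real.exp_pos 1)).2 hpow
  linarith

/-- entropic lower bound on quantum guesswork via Holevo information. -/
theorem quantum_guesswork_entropic_lower_bound {d n : ℕ}
    (ρ : Fin n → Matrix (Fin d) (Fin d) ℂ) (p : Fin n → ℝ)
    (hρ : ∀ x, (ρ x).PosSemidef) (hρtr : ∀ x, (ρ x).trace = 1)
    (hp : ∀ x, 0 ≤ p x) (hpsum : ∑ x, p x = 1) :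
    (2 : ℝ) ^ (shannonH p - holevoInfo ρ p) / Real.exp 1 + 1 / 2 ≤ QGuesswork ρ p := by
  have : Nonempty {E : Equiv.Perm (Fin n) → Matrix (Fin d) (Fin d) ℂ // IsPOVM E} := by
    refine ⟨⟨fun σ => if σ = 1 then 1 else 0, fun σ => ?_, by simp⟩⟩
    dsimp only
    split_ifs
    · exact PosSemidef.one
    · exact PosSemidef.zero
  exact le_ciInf (fun E => qg_Ghat_bound ρ p hρ hρtr hp hpsum E.1 E.2)

end
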